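/- Let d ∈ ℕ, q ∈ ℕ∪{0}, K, d⋆, d* ∈ ℕ, β, r ∈ (0,∞), with d* ≤ d and d*·q ≤ K·q. Set e := β·(min{1,β})^q. Then there exists a constant c ∈ (0,∞) depending only on (d,q,K,d⋆,d*,β,r) such that for all γ ∈ (0,1]: log N(G^CHOM_d(q,K,d⋆,d*,β,r), γ) ≤ c·(1/γ)^{d*/e}. -/

import Mathlib

open MeasureTheory ENNReal Set

noncomputable section

namespace ZZS

/-! ## Basic geometry -/

/-- The closed unit cube `[0,1]^m`. -/
def cube (m : ℕ) : Set (Fin m → ℝ) := Set.univ.pi fun _ => Set.Icc (0 : ℝ) 1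

/-- The open unit cube `(0,1)^m`. -/
def cubeo (m : ℕ) : Set (Fin m → ℝ) := Set.univ.pi fun _ => Set.Ioo (0 : ℝ) 1

/-- The label set `{-1, 1} ⊆ ℝ`. -/
def labels : Set ℝ := {-1, 1}

/-- Euclidean distance on `Fin m → ℝ`. -/
def e2 {m : ℕ} (x z : Fin m → ℝ) : ℝ := Real.sqrt (∑ i, (x i - z i) ^ 2)

/-! ## Multi-index partial derivatives and Hölder balls -/

/-- Iterated partial derivative along a list of coordinate directions. -/
def pderivList {m : ℕ} : List (Fin m) → ((Fin m → ℝ) → ℝ) → (Fin m → ℝ) → ℝ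
  | [], f => f
  | i :: l, f => pderivList l fun x => fderiv ℝ f x (Pi.single i 1)

/-- The canonical list of directions attached to a multi-index. -/
def idxList {m : ℕ} (u : Fin m → ℕ) : List (Fin m) :=
  (List.finRange m).flatMap fun i => List.replicate (u i) i

/-- The partial derivative `D^u f` for a multi-index `u`. -/
def Dm {m : ℕ} (u : Fin m → ℕ) (f : (Fin m → ℝ) → ℝ) : (Fin m → ℝ) → ℝ :=
  pderivList (idxList u) f

/-- The order `‖u‖₁` of a multi-index `u`. -/
def mord {m : ℕ} (u : Fin m → ℕ) : ℕ := ∑ i, u i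

/-- The Hölder-`β` norm of `f`, suprema taken over the set `S` (value in `ℝ≥0∞`). -/
def holderNormOn (m : ℕ) (β : ℝ) (S : Set (Fin m → ℝ)) (f : (Fin m → ℝ) → ℝ) : ℝ≥0∞ :=
  (⨆ (u : Fin m → ℕ) (_ : (mord u : ℝ) < β) (x ∈ S), ENNReal.ofReal |Dm u f x|) +
    ⨆ (u : Fin m → ℕ) (_ : (⌈β⌉ : ℝ) - 1 ≤ (mord u : ℝ) ∧ (mord u : ℝ) < β)
      (x ∈ S) (z ∈ S) (_ : x ≠ z),
      ENNReal.ofReal |Dm u f x - Dm u f z| /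
        ENNReal.ofReal (e2 x z) ^ (β + 1 - (⌈β⌉ : ℝ))

/-- `⌈β - 1⌉`, the number of derivatives required for Hölder-`β` smoothness. -/
def smoothOrder (β : ℝ) : ℕ := ⌈β - 1⌉₊

/-- The Hölder ball `B^β_r([0,1]^m)`:  `⌈β-1⌉`-times continuously differentiable functions on
the interior of the cube (with uniformly continuous derivatives, so that they extend
continuously), with Hölder-`β` norm at most `r`. -/
def HolderBall (m : ℕ) (β r : ℝ) : Set ((Fin m → ℝ) → ℝ) :=
  {f | ContinuousOn f (cube m) ∧
    ContDiffOn ℝ (smoothOrder β : ℕ∞) f (cubeo m) ∧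
    (∀ u : Fin m → ℕ, (mord u : ℝ) < β → UniformContinuousOn (Dm u f) (cubeo m)) ∧
    holderNormOn m β (cubeo m) f ≤ ENNReal.ofReal r}

/-! ## Compositional function classes -/

/-- `G^H_m(dstar, β, r)`: Hölder-`β` functions of `dstar` of the `m` coordinates. -/
def GH (m dstar : ℕ) (β r : ℝ) : Set ((Fin m → ℝ) → ℝ) :=
  {f | ∃ (e : Fin dstar → Fin m) (g : (Fin dstar → ℝ) → ℝ),
    StrictMono e ∧ g ∈ HolderBall dstar β r ∧ ∀ x ∈ cube m, f x = g fun j => x (e j)}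

/-- `G^M_m(dmax)`: maxima of at most `dmax` coordinates. -/
def GM (m dmax : ℕ) : Set ((Fin m → ℝ) → ℝ) :=
  {f | ∃ (I : Finset (Fin m)) (hI : I.Nonempty), I.card ≤ dmax ∧
    ∀ x ∈ cube m, f x = I.sup' hI fun i => x i}

/-- The compositional class `G^CHOM_d(q, K, dmax, dstar, β, r)`. -/
def GCHOM (K dmax dstar : ℕ) (β r : ℝ) : ℕ → (d : ℕ) → Set ((Fin d → ℝ) → ℝ)
  | 0, d => {f | ∃ h ∈ GH d dstar β r ∪ GM d dmax, ∀ x ∈ cube d, f x = h x}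
  | q + 1, d =>
    {f | ∃ (H : (Fin d → ℝ) → Fin K → ℝ) (g : (Fin K → ℝ) → ℝ),
      (∀ j, (fun x => H x j) ∈ GH d dstar β r ∪ GM d dmax) ∧
      (∀ x ∈ cube d, H x ∈ cube K) ∧
      g ∈ GCHOM K dmax dstar β r q K ∧ ∀ x ∈ cube d, f x = g (H x)}

/-- The compositional class `G^CH_d(q, K, dstar, β, r)` (no max-value components). -/
def GCH (K dstar : ℕ) (β r : ℝ) : ℕ → (d : ℕ) → Set ((Fin d → ℝ) → ℝ)
  | 0, d => {f | ∃ h ∈ GH d dstar β r, ∀ x ∈ cube d, f x = h x}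
  | q + 1, d =>
    {f | ∃ (H : (Fin d → ℝ) → Fin K → ℝ) (g : (Fin K → ℝ) → ℝ),
      (∀ j, (fun x => H x j) ∈ GH d dstar β r) ∧
      (∀ x ∈ cube d, H x ∈ cube K) ∧
      g ∈ GCH K dstar β r q K ∧ ∀ x ∈ cube d, f x = g (H x)}

/-! ## Losses, risks, and data distributions -/

/-- The sign function (`sgn 0 = 1`). -/
def sgn (t : ℝ) : ℝ := if 0 ≤ t then 1 else -1

/-- The hinge loss. -/
def hinge (t : ℝ) : ℝ := max 0 (1 - t)

/-- The truncation operator `T_F`. -/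
def trunc (F t : ℝ) : ℝ := min F (max (-F) t)

/-- The joint distribution `P_{η,Q}` on `[0,1]^d × {-1,1}` with input marginal `Q` and
conditional class probability function `η`. -/
def jointMeasure {d : ℕ} (η : (Fin d → ℝ) → ℝ) (Q : Measure (Fin d → ℝ)) :
    Measure ((Fin d → ℝ) × ℝ) :=
  Q.bind fun x =>
    ENNReal.ofReal (η x) • Measure.dirac (x, (1 : ℝ)) +
      ENNReal.ofReal (1 - η x) • Measure.dirac (x, (-1 : ℝ))

/-- The 0-1 risk (misclassification error). -/
def risk01 {d : ℕ} (P : Measure ((Fin d → ℝ) × ℝ)) (f : (Fin d → ℝ) → ℝ) : ℝ :=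
  (P {p | sgn (f p.1) ≠ p.2}).toReal

/-- The infimum of the 0-1 risk over all measurable functions. -/
def bayes01 {d : ℕ} (P : Measure ((Fin d → ℝ) × ℝ)) : ℝ :=
  ⨅ g : {g : (Fin d → ℝ) → ℝ // Measurable g}, risk01 P g.1

/-- The excess 0-1 risk. -/
def excess01 {d : ℕ} (P : Measure ((Fin d → ℝ) × ℝ)) (f : (Fin d → ℝ) → ℝ) : ℝ :=
  risk01 P f - bayes01 P

/-- The `φ`-risk. -/
def riskPhi {d : ℕ} (φ : ℝ → ℝ) (P : Measure ((Fin d → ℝ) × ℝ)) (f : (Fin d → ℝ) → ℝ) : ℝ :=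
  ∫ p, φ (p.2 * f p.1) ∂P

/-- The infimum of the `φ`-risk over all measurable functions. -/
def bayesPhi {d : ℕ} (φ : ℝ → ℝ) (P : Measure ((Fin d → ℝ) × ℝ)) : ℝ :=
  ⨅ g : {g : (Fin d → ℝ) → ℝ // Measurable g}, riskPhi φ P g.1

/-- The excess `φ`-risk. -/
def excessPhi {d : ℕ} (φ : ℝ → ℝ) (P : Measure ((Fin d → ℝ) × ℝ)) (f : (Fin d → ℝ) → ℝ) : ℝ :=
  riskPhi φ P f - bayesPhi φ P

/-- A Borel probability measure on `[0,1]^d × {-1,1}`, presented by its input marginal `Q`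
(a Borel probability measure concentrated on the cube) and its conditional class
probability function `η` (measurable, `[0,1]`-valued);  the measure itself is
`jointMeasure η Q`. -/
structure DataDist (d : ℕ) where
  η : (Fin d → ℝ) → ℝ
  Q : Measure (Fin d → ℝ)
  η_meas : Measurable η
  η_mem : ∀ x, η x ∈ Set.Icc (0 : ℝ) 1
  Q_prob : IsProbabilityMeasure Q
  Q_cube : Q (cube d) = 1

/-- The measure on `[0,1]^d × {-1,1}` associated with a `DataDist`. -/
def DataDist.P {d : ℕ} (D : DataDist d) : Measure ((Fin d → ℝ) × ℝ) := jointMeasure D.η D.Q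

/-- `x ^ s` for `s ∈ [0,∞]`, with the conventions `x ^ ∞ = 0` for `x < 1` and `1 ^ ∞ = 1`. -/
def rpowE (x : ℝ≥0∞) (s : ℝ≥0∞) : ℝ≥0∞ :=
  if s = ∞ then (if x < 1 then 0 else if x = 1 then 1 else ∞) else x ^ s.toReal

/-- The Tsybakov noise class `T^{d,s}_{α,τ}` (noise exponent `s ∈ [0,∞]`,
threshold `τ ∈ (0,∞]`). -/
def Tsybakov (d : ℕ) (s : ℝ≥0∞) (α : ℝ) (τ : ℝ≥0∞) : Set (DataDist d) :=
  {P | ∀ t : ℝ, 0 < t → ENNReal.ofReal t ≤ τ →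
    P.Q ({x | |2 * P.η x - 1| ≤ t} ∩ cube d) ≤ ENNReal.ofReal α * rpowE (ENNReal.ofReal t) s}

/-- The class `H^{d,β,r}_{q,K,dstar,dmax}`: distributions whose conditional class probability
agrees a.s. with a member of `G^CHOM`. -/
def HCHOM (d q K dstar dmax : ℕ) (β r : ℝ) : Set (DataDist d) :=
  {P | ∃ f ∈ GCHOM K dmax dstar β r q d, ∀ᵐ x ∂P.Q, P.η x = f x}

/-- `M_{Λ,d}`: Borel probability measures on `[0,1]^d` with a `[0,Λ]`-valued density with
respect to Lebesgue measure. -/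
def MLam (d : ℕ) (Λ : ℝ) : Set (Measure (Fin d → ℝ)) :=
  {Q | ∃ g : (Fin d → ℝ) → ℝ, Measurable g ∧ (∀ x, g x ∈ Set.Icc 0 Λ) ∧
    Q = (volume.restrict (cube d)).withDensity fun x => ENNReal.ofReal (g x)}

/-- The class `H^{d,β,r,Λ}_{q,K,dstar}`: joint laws `P_{η,Q}` with `η ∈ G^CH` (valued in
`[0,1]`) and `Q ∈ M_{Λ,d}`. -/
def HCHL (d q K dstar : ℕ) (β r Λ : ℝ) : Set (DataDist d) :=
  {P | (∃ f ∈ GCH K dstar β r q d, (∀ x ∈ cube d, f x ∈ Set.Icc (0 : ℝ) 1) ∧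
      ∀ᵐ x ∂P.Q, P.η x = f x) ∧ P.Q ∈ MLam d Λ}

/-- The class `H^{d,β,r}_{q,K,dstar}`: joint laws `P_{η,Q}` with `η ∈ G^CH` (valued in
`[0,1]`) and `Q` an arbitrary Borel probability measure on the cube. -/
def HCH (d q K dstar : ℕ) (β r : ℝ) : Set (DataDist d) :=
  {P | ∃ f ∈ GCH K dstar β r q d, (∀ x ∈ cube d, f x ∈ Set.Icc (0 : ℝ) 1) ∧
    ∀ᵐ x ∂P.Q, P.η x = f x}

/-! ## Samples and estimators -/

/-- The law of an i.i.d. sample of size `n` from `μ`. -/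
def iid {α : Type*} [MeasurableSpace α] (μ : Measure α) : (n : ℕ) → Measure (Fin n → α)
  | 0 => Measure.dirac fun i => i.elim0
  | n + 1 => (iid μ n).bind fun p => μ.map fun a => Fin.snoc p a

/-- An estimator: a rule assigning to each sample of size `n` a function `[0,1]^d → ℝ`. -/
def Estimator (d n : ℕ) := (Fin n → (Fin d → ℝ) × ℝ) → (Fin d → ℝ) → ℝ

/-- (Joint) measurability of an estimator. -/
def Estimator.Meas {d n : ℕ} (A : Estimator d n) : Prop :=
  Measurable fun p : (Fin n → (Fin d → ℝ) × ℝ) × (Fin d → ℝ) => A p.1 p.2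

/-- The expected excess 0-1 risk `E_{P^{⊗n}}[E_P(f̂_n)]` of an estimator. -/
def expectedExcess01 {d : ℕ} (P : Measure ((Fin d → ℝ) × ℝ)) {n : ℕ} (A : Estimator d n) : ℝ :=
  ∫ ω, excess01 P (A ω) ∂iid P n

/-- The covering number `N(F, γ)` (uniform norm over `Ω`), valued in `ℝ≥0∞`. -/
def coveringNumber {X : Type*} (Ω : Set X) (F : Set (X → ℝ)) (γ : ℝ) : ℝ≥0∞ :=
  ⨅ (A : Finset (X → ℝ))
    (_ : ↑A ⊆ F ∧ ∀ f ∈ F, ∃ g ∈ A, ∀ x ∈ Ω, |f x - g x| ≤ γ),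
    (A.card : ℝ≥0∞)

/-- `f` is an empirical `φ`-risk minimizer over `F` for the sample `ω`. -/
def IsERM {d n : ℕ} (φ : ℝ → ℝ) (F : Set ((Fin d → ℝ) → ℝ))
    (ω : Fin n → (Fin d → ℝ) × ℝ) (f : (Fin d → ℝ) → ℝ) : Prop :=
  f ∈ F ∧ ∀ g ∈ F,
    (n : ℝ)⁻¹ * ∑ i, φ ((ω i).2 * f ((ω i).1)) ≤ (n : ℝ)⁻¹ * ∑ i, φ ((ω i).2 * g ((ω i).1))

/-! ## ReLU neural networks -/

/-- A feedforward ReLU network with input dimension `d`. -/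
structure ReLUNet (d : ℕ) where
  L : ℕ
  width : ℕ → ℕ
  W : (i : ℕ) → Fin (width (i + 1)) → Fin (width i) → ℝ
  v : (i : ℕ) → Fin (width i) → ℝ
  h0 : width 0 = d
  hL : width (L + 1) = 1

/-- The `i`-th intermediate layer output `W_i σ_{v_i} ⋯ W_1 σ_{v_1} W_0 x`. -/
def ReLUNet.layer {d : ℕ} (net : ReLUNet d) (x : Fin (net.width 0) → ℝ) :
    (i : ℕ) → Fin (net.width (i + 1)) → ℝ
  | 0 => fun j => ∑ k, net.W 0 j k * x k
  | i + 1 => fun j => ∑ k, net.W (i + 1) j k * max 0 (net.layer x i k - net.v (i + 1) k)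

/-- The real-valued function computed by a ReLU network. -/
def ReLUNet.eval {d : ℕ} (net : ReLUNet d) (x : Fin d → ℝ) : ℝ :=
  net.layer (fun j => x (Fin.cast net.h0 j)) net.L (Fin.cast net.hL.symm 0)

/-- The class `F^NN_d(G, N, S, B, Fb)` of ReLU networks with depth `≤ G`, widths `≤ N`,
at most `S` nonzero parameters, parameter magnitudes `≤ B`, and uniform norm on the cube
`≤ Fb`. -/
def FNN (d : ℕ) (G N : ℝ) (S : ℝ≥0∞) (B : ℝ) (Fb : ℝ≥0∞) : Set ((Fin d → ℝ) → ℝ) :=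
  {f | ∃ net : ReLUNet d,
    (∀ x, f x = net.eval x) ∧
    (net.L : ℝ) ≤ G ∧
    (∀ i ≤ net.L + 1, (net.width i : ℝ) ≤ N) ∧
    ((∑ i ∈ Finset.range (net.L + 1),
        (Nat.card {p : Fin (net.width (i + 1)) × Fin (net.width i) // net.W i p.1 p.2 ≠ 0}
          : ℝ≥0∞)) +
      ∑ i ∈ Finset.range net.L,
        (Nat.card {j : Fin (net.width (i + 1)) // net.v (i + 1) j ≠ 0} : ℝ≥0∞)) ≤ S ∧
    (∀ i ≤ net.L, ∀ j k, |net.W i j k| ≤ B) ∧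
    (∀ i, 1 ≤ i → i ≤ net.L → ∀ j, |net.v i j| ≤ B) ∧
    ∀ x ∈ cube d, ENNReal.ofReal |f x| ≤ Fb}

/-! ## Kullback–Leibler divergence -/

open Classical in
/-- The Kullback–Leibler divergence. -/
def KL {X : Type*} [MeasurableSpace X] (P Q : Measure X) : ℝ≥0∞ :=
  if P ≪ Q ∧ Integrable (fun x => Real.log (P.rnDeriv Q x).toReal) P then
    ENNReal.ofReal (∫ x, Real.log (P.rnDeriv Q x).toReal ∂P)
  else ∞

/-- The exponent `e / (dstar/(s+1) + (1 + 1/(s+1))·e)` of the minimax rate, for noise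
exponent `s ∈ [0,∞]` (equal to `1` when `s = ∞`). -/
def rateExp (dstar : ℕ) (e : ℝ) (s : ℝ≥0∞) : ℝ :=
  if s = ∞ then 1
  else e / ((dstar : ℝ) / (s.toReal + 1) + (1 + 1 / (s.toReal + 1)) * e)

/-!
Entropy is counted with cells, sets of functions any two of which agree up to `ε`. Writing the
unit cube as a union of `(n + 1) ^ m` subcubes of side `2 / (n + 2)`, the difference of two
functions of a Hölder ball of order `β` lying in one cell of accuracy `ε ≈ n ^ (-β)`, restricted to
a subcube, rescaled to the unit cube and divided by `ε`, belongs to a fixed bounded class of smooth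
functions, which is equicontinuous and so has finitely many cells of accuracy `2 ^ (-β)`. Halving
the side thus improves the accuracy by the factor `2 ^ (-β)` at the price of `O(n ^ m)` in entropy,
and summing the geometric series of prices gives entropy `O(γ ^ (-m / β))`.

A composition loses accuracy only through the Hölder exponents of its outer layers: the `q` layers
outside the innermost one compose to a function of Hölder exponent `min 1 β ^ q`, so that the
innermost layer has to be resolved at scale `γ ^ (1 / min 1 β ^ q)`, which produces the entropy
exponent `dstar / (β * min 1 β ^ q)`. Maxima of coordinates form a finite set and cost nothing.
-/

/-! ## Cell decompositions of function classes -/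

section Cells

variable {X Y Z ι : Type*}

/-- The class `F` is covered by at most `N` cells, the members of a common cell being uniformly
within `ε` of each other over `Ω`. Compared with the covering number, the members of a cell need
not be close to an element of `F`, which makes the notion stable under composition; `N` is real so
that exponential bounds can be substituted. -/
def HasCells [PseudoMetricSpace Y] (Ω : Set X) (F : Set (X → Y)) (N ε : ℝ) : Prop :=
  ∃ (n : ℕ) (C : Fin n → Set (X → Y)), (n : ℝ) ≤ N ∧ F ⊆ ⋃ i, C i ∧
    ∀ i, ∀ f ∈ C i, ∀ g ∈ C i, ∀ x ∈ Ω, dist (f x) (g x) ≤ ε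

section PseudoMetricSpace

variable [PseudoMetricSpace Y] {Ω : Set X} {F G : Set (X → Y)} {N N' ε ε' : ℝ}

theorem HasCells.of_fintype [Fintype ι] (C : ι → Set (X → Y)) (hN : (Fintype.card ι : ℝ) ≤ N)
    (hF : F ⊆ ⋃ i, C i) (hC : ∀ i, ∀ f ∈ C i, ∀ g ∈ C i, ∀ x ∈ Ω, dist (f x) (g x) ≤ ε) :
    HasCells Ω F N ε := by
  refine ⟨Fintype.card ι, C ∘ (Fintype.equivFin ι).symm, hN, ?_, fun i => hC _⟩
  simpa only [Function.comp_apply, (Fintype.equivFin ι).symm.surjective.iUnion_comp] using hF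

theorem hasCells_one (h : ∀ f ∈ F, ∀ g ∈ F, ∀ x ∈ Ω, dist (f x) (g x) ≤ ε) :
    HasCells Ω F 1 ε :=
  .of_fintype (fun _ : Unit => F) (by simp) (subset_iUnion (fun _ => F) ()) fun _ => h

theorem HasCells.mono (h : HasCells Ω F N ε) (hGF : G ⊆ F) (hN : N ≤ N') (hε : ε ≤ ε') :
    HasCells Ω G N' ε' := by
  obtain ⟨n, C, hn, hF, hC⟩ := h
  exact ⟨n, C, hn.trans hN, hGF.trans hF, fun i f hf g hg x hx => (hC i f hf g hg x hx).trans hε⟩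

theorem HasCells.exists_net (h : HasCells Ω F N ε) :
    ∃ A : Finset (X → Y), ↑A ⊆ F ∧ (A.card : ℝ) ≤ N ∧
      ∀ f ∈ F, ∃ g ∈ A, ∀ x ∈ Ω, dist (f x) (g x) ≤ ε := by
  classical
  obtain ⟨n, C, hn, hF, hC⟩ := h
  choose rep hrepF hrepC using fun i : {i // (F ∩ C i).Nonempty} => i.2
  refine ⟨Finset.univ.image rep, ?_, le_trans ?_ hn, fun f hf => ?_⟩
  · simpa [Set.range_subset_iff] using hrepF
  · have hcard : (Finset.univ.image rep).card ≤ Fintype.card (Fin n) :=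
      Finset.card_image_le.trans (Fintype.card_subtype_le _)
    exact_mod_cast hcard.trans_eq (Fintype.card_fin n)
  · obtain ⟨i, hi⟩ := mem_iUnion.1 (hF hf)
    let j : {i // (F ∩ C i).Nonempty} := ⟨i, f, hf, hi⟩
    exact ⟨rep j, Finset.mem_image_of_mem _ (Finset.mem_univ j), hC i f hi _ (hrepC j)⟩

theorem HasCells.iUnion [Fintype ι] {F : ι → Set (X → Y)} {N : ι → ℝ}
    (h : ∀ i, HasCells Ω (F i) (N i) ε) : HasCells Ω (⋃ i, F i) (∑ i, N i) ε := by
  choose n C hn hF hC using h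
  refine .of_fintype (fun p : Σ i, Fin (n i) => C p.1 p.2) ?_ ?_ fun p => hC p.1 p.2
  · simpa using Finset.sum_le_sum fun i (_ : i ∈ Finset.univ) => hn i
  · rw [iUnion_sigma]
    exact iUnion_mono hF

theorem HasCells.closure [TopologicalSpace X] (h : HasCells Ω F N ε)
    (hF : ∀ f ∈ F, ContinuousOn f (closure Ω)) : HasCells (closure Ω) F N ε := by
  obtain ⟨n, C, hn, hFC, hC⟩ := h
  refine ⟨n, fun i => C i ∩ F, hn, ?_, ?_⟩
  · rw [← iUnion_inter]
    exact subset_inter hFC subset_rfl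
  · rintro i f ⟨hfC, hfF⟩ g ⟨hgC, hgF⟩ x hx
    exact le_on_closure (hC i f hfC g hgC) (continuous_dist.comp_continuousOn
      ((hF f hfF).prodMk (hF g hgF))) continuousOn_const hx

theorem HasCells.precomp {Ω' : Set Z} {p : Z → X} (h : HasCells Ω F N ε) (hp : MapsTo p Ω' Ω) :
    HasCells Ω' {f | ∃ g ∈ F, EqOn f (g ∘ p) Ω'} N ε := by
  obtain ⟨n, C, hn, hF, hC⟩ := h
  refine ⟨n, fun i => {f | ∃ g ∈ C i, EqOn f (g ∘ p) Ω'}, hn, ?_, ?_⟩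
  · rintro f ⟨g, hg, hfg⟩
    obtain ⟨i, hi⟩ := mem_iUnion.1 (hF hg)
    exact mem_iUnion.2 ⟨i, g, hi, hfg⟩
  · rintro i f ⟨g, hg, hfg⟩ f' ⟨g', hg', hfg'⟩ x hx
    rw [hfg hx, hfg' hx]
    exact hC i g hg g' hg' _ (hp hx)

theorem HasCells.pi [Fintype ι] (h : HasCells Ω F N ε) (hε : 0 ≤ ε) :
    HasCells Ω {H : X → ι → Y | ∀ j, (fun x => H x j) ∈ F} (N ^ Fintype.card ι) ε := by
  classical
  obtain ⟨n, C, hn, hF, hC⟩ := h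
  refine .of_fintype (fun (i : ι → Fin n) => {H | ∀ j, (fun x => H x j) ∈ C (i j)}) ?_ ?_ ?_
  · simpa using pow_le_pow_left₀ n.cast_nonneg hn _
  · intro H hH
    choose i hi using fun j => mem_iUnion.1 (hF (hH j))
    exact mem_iUnion.2 ⟨i, hi⟩
  · exact fun i H hH H' hH' x hx => (dist_pi_le_iff hε).2 fun j => hC _ _ (hH j) _ (hH' j) x hx

theorem HasCells.comp [PseudoMetricSpace Z] {Ω' : Set Y} {G : Set (Y → Z)} {M δ ω : ℝ}
    (hF : HasCells Ω F N δ) (hG : HasCells Ω' G M ε)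
    (hω : ∀ g ∈ G, ∀ y ∈ Ω', ∀ z ∈ Ω', dist y z ≤ δ → dist (g y) (g z) ≤ ω) :
    HasCells Ω {f | ∃ H ∈ F, ∃ g ∈ G, MapsTo H Ω Ω' ∧ EqOn f (g ∘ H) Ω} (N * M) (ω + ε) := by
  obtain ⟨n, C, hn, hFC, hC⟩ := hF
  obtain ⟨m, D, hm, hGD, hD⟩ := hG
  refine .of_fintype (fun (p : Fin n × Fin m) => {f | ∃ H ∈ C p.1, ∃ g ∈ G ∩ D p.2,
    MapsTo H Ω Ω' ∧ EqOn f (g ∘ H) Ω}) ?_ ?_ ?_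
  · simpa using mul_le_mul hn hm m.cast_nonneg (n.cast_nonneg.trans hn)
  · rintro f ⟨H, hH, g, hg, hf⟩
    obtain ⟨i, hi⟩ := mem_iUnion.1 (hFC hH)
    obtain ⟨j, hj⟩ := mem_iUnion.1 (hGD hg)
    exact mem_iUnion.2 ⟨(i, j), H, hi, g, ⟨hg, hj⟩, hf⟩
  · rintro ⟨i, j⟩ f ⟨H, hH, g, ⟨hg, hgD⟩, hHΩ, hf⟩ f' ⟨H', hH', g', ⟨-, hgD'⟩, hHΩ', hf'⟩ x hx
    rw [hf hx, hf' hx]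
    exact (dist_triangle _ (g (H' x)) _).trans (add_le_add
      (hω g hg _ (hHΩ hx) _ (hHΩ' hx) (hC i H hH H' hH' x hx)) (hD j g hgD g' hgD' _ (hHΩ' hx)))

/-- The Arzelà–Ascoli argument: a function is determined up to `ε` by its values, up to `ε / 4`,
on a finite net of `Ω`. -/
theorem exists_hasCells_of_uniformEquicontinuousOn [PseudoMetricSpace X] {K : Set Y}
    (hΩ : TotallyBounded Ω) (hK : TotallyBounded K) (hFK : ∀ f ∈ F, MapsTo f Ω K)
    (hF : UniformEquicontinuousOn ((↑) : F → X → Y) Ω) (hε : 0 < ε) :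
    ∃ N, HasCells Ω F N ε := by
  classical
  rw [← uniformEquicontinuous_restrict_iff, Metric.uniformEquicontinuous_iff] at hF
  obtain ⟨δ, hδ, hFδ⟩ := hF (ε / 4) (by positivity)
  obtain ⟨t, htΩ, htfin, ht⟩ := Metric.finite_approx_of_totallyBounded hΩ δ hδ
  obtain ⟨s, -, hsfin, hs⟩ := Metric.finite_approx_of_totallyBounded hK (ε / 4) (by positivity)
  have := htfin.fintype
  have := hsfin.fintype
  refine ⟨_, .of_fintype (fun v : t → s => {f | f ∈ F ∧ ∀ y : t, dist (f y) (v y) < ε / 4})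
    le_rfl ?_ ?_⟩
  · intro f hf
    choose v hvs hv using fun y : t => mem_iUnion₂.1 (hs (hFK f hf (htΩ y.2)))
    exact mem_iUnion.2 ⟨fun y => ⟨v y, hvs y⟩, hf, hv⟩
  · rintro v f ⟨hf, hfv⟩ g ⟨hg, hgv⟩ x hx
    obtain ⟨y, hy, hxy⟩ := mem_iUnion₂.1 (ht hx)
    have hfxy : dist (f x) (f y) < ε / 4 := hFδ ⟨x, hx⟩ ⟨y, htΩ hy⟩ hxy ⟨f, hf⟩
    have hgxy : dist (g x) (g y) < ε / 4 := hFδ ⟨x, hx⟩ ⟨y, htΩ hy⟩ hxy ⟨g, hg⟩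
    have hfg := dist_triangle_right (f y) (g y) (v ⟨y, hy⟩)
    have hfgx := dist_triangle4 (f x) (f y) (g y) (g x)
    rw [dist_comm (g y)] at hfgx
    linarith [hfv ⟨y, hy⟩, hgv ⟨y, hy⟩]

end PseudoMetricSpace

theorem HasCells.coveringNumber_le {Ω : Set X} {F : Set (X → ℝ)} {N ε : ℝ}
    (h : HasCells Ω F N ε) : coveringNumber Ω F ε ≤ ENNReal.ofReal N := by
  obtain ⟨A, hAF, hA, hnet⟩ := h.exists_net
  refine (iInf₂_le A ⟨hAF, hnet⟩).trans ?_
  rw [← ENNReal.ofReal_natCast]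
  exact ENNReal.ofReal_le_ofReal hA

/-- Each cell of `F` is split according to the cells in `U` of the normalized differences, read in
every chart, from a fixed representative of the cell. -/
theorem HasCells.refine [SeminormedAddCommGroup Y] [NormedSpace ℝ Y] [Fintype ι] {Ω : Set X}
    {Ω' : Set Z} {F : Set (X → Y)} {U : Set (Z → Y)} {N M ρ ε : ℝ} (hF : HasCells Ω F N ε)
    (hU : HasCells Ω' U M ρ) (hε : 0 < ε) (p : ι → Z → X) (hp : Ω ⊆ ⋃ a, p a '' Ω')
    (hFU : ∀ f ∈ F, ∀ g ∈ F, (∀ x ∈ Ω, dist (f x) (g x) ≤ ε) →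
      ∀ a, (fun z => ε⁻¹ • (f (p a z) - g (p a z))) ∈ U) :
    HasCells Ω F (N * M ^ Fintype.card ι) (ρ * ε) := by
  classical
  obtain ⟨A, hAF, hA, hnet⟩ := hF.exists_net
  obtain ⟨n, C, hn, hUC, hC⟩ := hU
  refine .of_fintype (fun q : A × (ι → Fin n) =>
    {f | ∀ a, (fun z => ε⁻¹ • (f (p a z) - q.1.1 (p a z))) ∈ C (q.2 a)}) ?_ ?_ ?_
  · simpa using mul_le_mul hA (pow_le_pow_left₀ n.cast_nonneg hn _) (by positivity)
      (A.card.cast_nonneg.trans hA)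
  · intro f hf
    obtain ⟨g, hg, hfg⟩ := hnet f hf
    choose i hi using fun a => mem_iUnion.1 (hUC (hFU f hf g (hAF hg) hfg a))
    exact mem_iUnion.2 ⟨(⟨g, hg⟩, i), hi⟩
  · rintro q f hf f' hf' x hx
    obtain ⟨a, z, hz, rfl⟩ := mem_iUnion.1 (hp hx)
    have hdist := hC _ _ (hf a) _ (hf' a) z hz
    rwa [dist_smul₀, dist_sub_right, Real.norm_of_nonneg (inv_nonneg.2 hε.le),
      inv_mul_le_iff₀ hε, mul_comm] at hdist

end Cells

/-! ## Entropy exponents -/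

section EntropyExponent

open scoped NNReal

variable {X Y Z ι : Type*} [PseudoMetricSpace Y] {Ω : Set X} {F G : Set (X → Y)} {s t : ℝ}

/-- The class `F` has metric entropy `O(γ⁻ˢ)` over `Ω` as `γ → 0`, the entropy at scale `γ` being
the logarithm of the number of cells in the sense of `HasCells`. -/
def HasEntropyExponent (Ω : Set X) (F : Set (X → Y)) (s : ℝ) : Prop :=
  ∃ c : ℝ, ∀ γ, 0 < γ → γ ≤ 1 → HasCells Ω F (Real.exp (c * (1 / γ) ^ s)) γ

theorem HasEntropyExponent.exists_pos (h : HasEntropyExponent Ω F s) :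
    ∃ c : ℝ, 0 < c ∧ ∀ γ, 0 < γ → γ ≤ 1 → HasCells Ω F (Real.exp (c * (1 / γ) ^ s)) γ := by
  obtain ⟨c, hc⟩ := h
  refine ⟨max c 1, by positivity, fun γ hγ hγ1 => (hc γ hγ hγ1).mono subset_rfl ?_ le_rfl⟩
  gcongr
  exact le_max_left _ _

theorem HasEntropyExponent.mono (h : HasEntropyExponent Ω F s) (hGF : G ⊆ F) :
    HasEntropyExponent Ω G s :=
  h.imp fun _ hc γ hγ hγ1 => (hc γ hγ hγ1).mono hGF le_rfl le_rfl

theorem hasEntropyExponent_of_eqOn (hF : ∀ f ∈ F, ∀ g ∈ F, EqOn f g Ω) :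
    HasEntropyExponent Ω F s := by
  refine ⟨0, fun γ hγ _ => ?_⟩
  rw [zero_mul, Real.exp_zero]
  refine hasCells_one fun f hf g hg x hx => ?_
  rw [hF f hf g hg hx, dist_self]
  exact hγ.le

theorem HasEntropyExponent.iUnion [Finite ι] {F : ι → Set (X → Y)} (hs : 0 ≤ s)
    (h : ∀ i, HasEntropyExponent Ω (F i) s) : HasEntropyExponent Ω (⋃ i, F i) s := by
  have := Fintype.ofFinite ι
  choose c hc h using fun i => (h i).exists_pos
  refine ⟨Fintype.card ι + ∑ i, c i, fun γ hγ hγ1 =>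
    (HasCells.iUnion fun i => h i γ hγ hγ1).mono subset_rfl ?_ le_rfl⟩
  have hone : 1 ≤ (1 / γ) ^ s := Real.one_le_rpow (one_le_one_div hγ hγ1) hs
  set w : ℝ := (1 / γ) ^ s
  calc ∑ i, Real.exp (c i * w) ≤ ∑ _i : ι, Real.exp ((∑ j, c j) * w) := by
        gcongr with i hi
        exact Finset.single_le_sum (fun j _ => (hc j).le) hi
    _ = Fintype.card ι * Real.exp ((∑ j, c j) * w) := by
        rw [Finset.sum_const, nsmul_eq_mul, Finset.card_univ]
    _ ≤ Real.exp (Fintype.card ι * w) * Real.exp ((∑ j, c j) * w) := by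
        gcongr
        calc (Fintype.card ι : ℝ)
          _ ≤ Fintype.card ι * w := le_mul_of_one_le_right (by positivity) hone
          _ ≤ Fintype.card ι * w + 1 := le_add_of_nonneg_right zero_le_one
          _ ≤ Real.exp (Fintype.card ι * w) := Real.add_one_le_exp _
    _ = Real.exp ((Fintype.card ι + ∑ i, c i) * w) := by rw [← Real.exp_add, add_mul]

theorem HasEntropyExponent.union (hs : 0 ≤ s) (hF : HasEntropyExponent Ω F s)
    (hG : HasEntropyExponent Ω G s) : HasEntropyExponent Ω (F ∪ G) s := by
  rw [union_eq_iUnion]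
  exact .iUnion hs (Bool.forall_bool.2 ⟨hG, hF⟩)

theorem HasEntropyExponent.closure [TopologicalSpace X] (h : HasEntropyExponent Ω F s)
    (hF : ∀ f ∈ F, ContinuousOn f (closure Ω)) : HasEntropyExponent (closure Ω) F s :=
  h.imp fun _ hc γ hγ hγ1 => (hc γ hγ hγ1).closure hF

theorem HasEntropyExponent.precomp {Ω' : Set Z} {p : Z → X} (h : HasEntropyExponent Ω F s)
    (hp : MapsTo p Ω' Ω) : HasEntropyExponent Ω' {f | ∃ g ∈ F, EqOn f (g ∘ p) Ω'} s :=
  h.imp fun _ hc γ hγ hγ1 => (hc γ hγ hγ1).precomp hp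

theorem HasEntropyExponent.pi [Fintype ι] (h : HasEntropyExponent Ω F s) :
    HasEntropyExponent Ω {H : X → ι → Y | ∀ j, (fun x => H x j) ∈ F} s := by
  obtain ⟨c, hc⟩ := h
  refine ⟨Fintype.card ι * c, fun γ hγ hγ1 => ?_⟩
  rw [mul_assoc, Real.exp_nat_mul]
  exact (hc γ hγ hγ1).pi hγ.le

/-- The inner functions are resolved at the scale `(γ / 2C)^{1/a}`, which the outer ones turn into
`γ / 2`. -/
theorem HasEntropyExponent.comp [PseudoMetricSpace Z] {Ω' : Set Y} {H : Set (Y → Z)} {C a : ℝ≥0}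
    (hF : HasEntropyExponent Ω F s) (hH : HasEntropyExponent Ω' H t) (hs : 0 ≤ s)
    (ha : 0 < a) (hHC : ∀ g ∈ H, HolderOnWith C a g Ω') (hts : t ≤ s / a) :
    HasEntropyExponent Ω {k | ∃ f ∈ F, ∃ g ∈ H, MapsTo f Ω Ω' ∧ EqOn k (g ∘ f) Ω} (s / a) := by
  obtain ⟨c₁, _, hF⟩ := hF.exists_pos
  obtain ⟨c₂, hc₂, hH⟩ := hH.exists_pos
  have ha0 : (0 : ℝ) < a := ha
  obtain ⟨B, hB2, hCB⟩ : ∃ B : ℝ, 2 ≤ B ∧ C ≤ B / 2 :=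
    ⟨2 * max (C : ℝ) 1, by linarith [le_max_right (C : ℝ) 1], by linarith [le_max_left (C : ℝ) 1]⟩
  refine ⟨(c₁ + c₂) * B ^ (s / a), fun γ hγ hγ1 => ?_⟩
  set δ : ℝ := (γ / B) ^ (a : ℝ)⁻¹ with hδ
  have hδ0 : 0 < δ := by positivity
  have hδ1 : δ ≤ 1 := Real.rpow_le_one (by positivity)
    (by rw [div_le_one (by positivity)]; linarith) (by positivity)
  have hδa : δ ^ (a : ℝ) = γ / B := Real.rpow_inv_rpow (by positivity) ha0.ne'
  have hmod : ∀ g ∈ H, ∀ y ∈ Ω', ∀ z ∈ Ω', dist y z ≤ δ → dist (g y) (g z) ≤ γ / 2 := by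
    intro g hg y hy z hz hyz
    calc dist (g y) (g z) ≤ C * δ ^ (a : ℝ) := (hHC g hg).dist_le_of_le hy hz hyz
      _ ≤ B / 2 * (γ / B) := by rw [hδa]; gcongr
      _ = γ / 2 := by field_simp
  refine ((hF δ hδ0 hδ1).comp (hH (γ / 2) (by positivity) (by linarith)) hmod).mono subset_rfl
    ?_ (add_halves γ).le
  have hδs : (1 / δ) ^ s = (B / γ) ^ (s / a) := by
    rw [one_div, hδ, ← Real.inv_rpow (by positivity), inv_div, ← Real.rpow_mul (by positivity),
      inv_mul_eq_div]
  have hγt : (1 / (γ / 2)) ^ t ≤ (B / γ) ^ (s / a) := by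
    rw [one_div_div]
    calc (2 / γ) ^ t ≤ (2 / γ) ^ (s / a) :=
          Real.rpow_le_rpow_of_exponent_le (by rw [le_div_iff₀ hγ]; linarith) hts
      _ ≤ (B / γ) ^ (s / a) := by gcongr
  have hBγ : (B / γ) ^ (s / a) = B ^ (s / a) * (1 / γ) ^ (s / a) := by
    rw [← Real.mul_rpow (by positivity) (by positivity), mul_one_div]
  rw [← Real.exp_add, hδs, mul_assoc, ← hBγ, add_mul]
  gcongr

theorem HasEntropyExponent.of_geometric {T E ρ : ℝ} (hT : 0 ≤ T) (hE : 1 ≤ E) (hρ : 0 < ρ)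
    (hρ1 : ρ < 1) (hs : 0 ≤ s)
    (h : ∀ n : ℕ, HasCells Ω F (Real.exp (T * (1 / ρ ^ n) ^ s)) (ρ ^ n * E)) :
    HasEntropyExponent Ω F s := by
  refine ⟨T * (E / ρ) ^ s, fun γ hγ hγ1 => ?_⟩
  obtain ⟨n, hn1, hn2⟩ := exists_nat_pow_near_of_lt_one (show 0 < γ / E by positivity)
    (by rw [div_le_one (by positivity)]; linarith) hρ hρ1
  refine (h (n + 1)).mono subset_rfl ?_ ((lt_div_iff₀ (by positivity)).1 hn1).le
  have hpow : 1 / ρ ^ (n + 1) ≤ E / ρ * (1 / γ) := by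
    calc 1 / ρ ^ (n + 1) = 1 / ρ ^ n / ρ := by rw [pow_succ, div_div]
      _ ≤ 1 / (γ / E) / ρ := by gcongr
      _ = E / ρ * (1 / γ) := by field_simp
  rw [mul_assoc, ← Real.mul_rpow (by positivity) (by positivity)]
  gcongr

end EntropyExponent

/-! ## One-dimensional interpolation -/

section Line

open scoped NNReal

theorem holderOnWith_of_dist_le {X Y : Type*} [PseudoMetricSpace X] [PseudoMetricSpace Y]
    {C r : ℝ≥0} {f : X → Y} {s : Set X}
    (h : ∀ x ∈ s, ∀ y ∈ s, dist (f x) (f y) ≤ C * dist x y ^ (r : ℝ)) : HolderOnWith C r f s := by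
  intro x hx y hy
  rw [edist_nndist, edist_nndist, ← ENNReal.coe_rpow_of_nonneg _ r.coe_nonneg, ← ENNReal.coe_mul,
    ENNReal.coe_le_coe, ← NNReal.coe_le_coe]
  simpa using h x hx y hy

theorem holderOnWith_sub {X Y : Type*} [PseudoMetricSpace X] [SeminormedAddCommGroup Y]
    {C C' r : ℝ≥0} {f g : X → Y} {s : Set X} (hf : HolderOnWith C r f s)
    (hg : HolderOnWith C' r g s) : HolderOnWith (C + C') r (fun x => f x - g x) s := by
  refine holderOnWith_of_dist_le fun x hx y hy => ?_
  rw [NNReal.coe_add, add_mul]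
  exact (dist_sub_sub_le _ _ _ _).trans (add_le_add (hf.dist_le hx hy) (hg.dist_le hx hy))

theorem holderOnWith_const_smul {X Y : Type*} [PseudoMetricSpace X] [SeminormedAddCommGroup Y]
    [NormedSpace ℝ Y] {C r : ℝ≥0} {f : X → Y} {s : Set X} (c : ℝ) (hf : HolderOnWith C r f s) :
    HolderOnWith (C * ‖c‖₊) r (fun x => c • f x) s :=
  HolderWith.restrict_iff.1 ((HolderWith.restrict_iff.2 hf).smul c)

/-- `D j` is the `j`-th derivative of `D 0` on `s` for all `j ≤ k`. Carrying the derivatives along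
as data keeps out the junk values of `deriv`. -/
def IsDerivSeqOn (D : ℕ → ℝ → ℝ) (k : ℕ) (s : Set ℝ) : Prop :=
  ∀ j < k, ∀ t ∈ s, HasDerivAt (D j) (D (j + 1) t) t

/-- The function `φ` has `k` derivatives on `s`, the last of which is `α`-Hölder with
constant `L`. -/
def HasHolderDerivOn (k : ℕ) (L α : ℝ≥0) (φ : ℝ → ℝ) (s : Set ℝ) : Prop :=
  ∃ D : ℕ → ℝ → ℝ, D 0 = φ ∧ IsDerivSeqOn D k s ∧ HolderOnWith L α (D k) s

variable {D : ℕ → ℝ → ℝ} {k : ℕ} {L L' α : ℝ≥0} {φ ψ : ℝ → ℝ} {s t : Set ℝ} {a b : ℝ}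

theorem IsDerivSeqOn.mono {j : ℕ} (h : IsDerivSeqOn D k s) (hjk : j ≤ k) (hts : t ⊆ s) :
    IsDerivSeqOn D j t :=
  fun i hi x hx => h i (hi.trans_le hjk) x (hts hx)

theorem HasHolderDerivOn.mono_const (h : HasHolderDerivOn k L α φ s) (hL : L ≤ L') :
    HasHolderDerivOn k L' α φ s := by
  obtain ⟨D, hD0, hD, hDk⟩ := h
  exact ⟨D, hD0, hD, hDk.mono_const hL⟩

theorem HasHolderDerivOn.sub (hφ : HasHolderDerivOn k L α φ s) (hψ : HasHolderDerivOn k L' α ψ s) :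
    HasHolderDerivOn k (L + L') α (fun x => φ x - ψ x) s := by
  obtain ⟨D, rfl, hD, hDk⟩ := hφ
  obtain ⟨E, rfl, hE, hEk⟩ := hψ
  exact ⟨fun j x => D j x - E j x, rfl, fun j hj x hx => (hD j hj x hx).sub (hE j hj x hx),
    holderOnWith_sub hDk hEk⟩

theorem HasHolderDerivOn.const_smul (c : ℝ) (h : HasHolderDerivOn k L α φ s) :
    HasHolderDerivOn k (L * ‖c‖₊) α (fun x => c • φ x) s := by
  obtain ⟨D, rfl, hD, hDk⟩ := h
  exact ⟨fun j x => c • D j x, rfl, fun j hj x hx => (hD j hj x hx).const_smul c,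
    holderOnWith_const_smul c hDk⟩

theorem HasHolderDerivOn.comp_affine {h : ℝ≥0} (hφ : HasHolderDerivOn k L α φ s)
    (hts : MapsTo (fun x => a + h * x) t s) :
    HasHolderDerivOn k (L * h ^ (k + α : ℝ)) α (fun x => φ (a + h * x)) t := by
  obtain ⟨D, rfl, hD, hDk⟩ := hφ
  refine ⟨fun j x => h ^ j • D j (a + h * x), by simp, fun j hj x hx => ?_, ?_⟩
  · have haff : HasDerivAt (fun x : ℝ => a + h * x) h x := by
      simpa using ((hasDerivAt_id x).const_mul (h : ℝ)).const_add a
    refine (((hD j hj _ (hts hx)).comp x haff).const_smul (h ^ j)).congr_deriv ?_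
    simp only [NNReal.smul_def, smul_eq_mul, NNReal.coe_pow]
    ring
  · have haff : HolderOnWith h 1 (fun x : ℝ => a + h * x) t := by
      refine holderOnWith_of_dist_le fun x _ y _ => ?_
      rw [dist_add_left, Real.dist_eq, ← mul_sub, abs_mul, NNReal.abs_eq, NNReal.coe_one,
        Real.rpow_one, Real.dist_eq]
    have hcomp := holderOnWith_const_smul (h ^ k : ℝ) (hDk.comp haff hts)
    rw [mul_one] at hcomp
    refine hcomp.mono_const (le_of_eq ?_)
    rw [NNReal.rpow_add_of_nonneg h k.cast_nonneg α.coe_nonneg, NNReal.rpow_natCast, nnnorm_pow,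
      NNReal.nnnorm_eq]
    ring

/-- Induct on `j`: the `j`-th derivative is controlled at a point of the first and at a point of
the last third of the interval, hence so is the next one at a point in between. -/
theorem exists_abs_isDerivSeqOn_le (j : ℕ) (B : ℝ) (hab : a < b) :
    ∃ C : ℝ, ∀ D, IsDerivSeqOn D j (Ioo a b) → (∀ x ∈ Ioo a b, |D 0 x| ≤ B) →
      ∃ x ∈ Ioo a b, |D j x| ≤ C := by
  induction j generalizing a b with
  | zero =>
    obtain ⟨x, hx⟩ := nonempty_Ioo.2 hab
    exact ⟨B, fun D _ hB => ⟨x, hx, hB x hx⟩⟩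
  | succ j ih =>
    obtain ⟨c, hac, hcb⟩ := exists_between hab
    obtain ⟨d, hcd, hdb⟩ := exists_between hcb
    obtain ⟨C₁, hC₁⟩ := ih hac
    obtain ⟨C₂, hC₂⟩ := ih hdb
    refine ⟨(C₁ + C₂) / (d - c), fun D hD hB => ?_⟩
    have hleft : Ioo a c ⊆ Ioo a b := Ioo_subset_Ioo_right hcb.le
    have hright : Ioo d b ⊆ Ioo a b := Ioo_subset_Ioo_left (hac.trans hcd).le
    obtain ⟨x, hx, hxC⟩ := hC₁ D (hD.mono j.le_succ hleft) fun z hz => hB z (hleft hz)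
    obtain ⟨y, hy, hyC⟩ := hC₂ D (hD.mono j.le_succ hright) fun z hz => hB z (hright hz)
    have hxy : d - c ≤ y - x := by linarith [hx.2, hy.1]
    have hIcc : Icc x y ⊆ Ioo a b := Icc_subset_Ioo hx.1 hy.2
    have hderiv : ∀ z ∈ Icc x y, HasDerivAt (D j) (D (j + 1) z) z := fun z hz =>
      hD j j.lt_succ_self z (hIcc hz)
    obtain ⟨z, hz, hslope⟩ := exists_hasDerivAt_eq_slope (D j) (D (j + 1)) (by linarith)
      (fun z hz => (hderiv z hz).continuousAt.continuousWithinAt)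
      (fun z hz => hderiv z (Ioo_subset_Icc_self hz))
    refine ⟨z, hIcc (Ioo_subset_Icc_self hz), ?_⟩
    have hsub : |D j y - D j x| ≤ C₁ + C₂ := (abs_sub _ _).trans (by linarith)
    rw [hslope, abs_div, abs_of_pos (a := y - x) (by linarith)]
    have := (abs_nonneg _).trans hsub
    gcongr

theorem lipschitzOnWith_of_isDerivSeqOn {C : ℝ≥0} (hs : Convex ℝ s) {j : ℕ} (hjk : j < k)
    (hD : IsDerivSeqOn D k s) (hC : ∀ x ∈ s, |D (j + 1) x| ≤ C) : LipschitzOnWith C (D j) s :=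
  hs.lipschitzOnWith_of_nnnorm_hasDerivWithin_le (fun x hx => (hD j hjk x hx).hasDerivWithinAt) hC

theorem exists_forall_abs_isDerivSeqOn_le (k : ℕ) (B L : ℝ) (hab : a < b) :
    ∃ C : ℝ≥0, ∀ D, IsDerivSeqOn D k (Ioo a b) → (∀ x ∈ Ioo a b, |D 0 x| ≤ B) →
      (∀ x ∈ Ioo a b, ∀ y ∈ Ioo a b, |D k x - D k y| ≤ L) →
        ∀ j ≤ k, ∀ x ∈ Ioo a b, |D j x| ≤ C := by
  induction k generalizing L with
  | zero =>
    refine ⟨B.toNNReal, fun D _ hB _ j hj x hx => ?_⟩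
    rw [Nat.le_zero.1 hj]
    exact (hB x hx).trans (Real.le_coe_toNNReal B)
  | succ k ih =>
    obtain ⟨C, hC⟩ := exists_abs_isDerivSeqOn_le (k + 1) B hab
    obtain ⟨C', hC'⟩ := ih ((C + L).toNNReal * (b - a))
    refine ⟨max (C + L).toNNReal C', fun D hD hB hosc => ?_⟩
    have htop : ∀ x ∈ Ioo a b, |D (k + 1) x| ≤ (C + L).toNNReal := by
      intro x hx
      obtain ⟨y, hy, hyC⟩ := hC D hD hB
      have htri := abs_sub_abs_le_abs_sub (D (k + 1) x) (D (k + 1) y)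
      exact le_trans (by linarith [hosc x hx y hy]) (Real.le_coe_toNNReal _)
    have hlip := lipschitzOnWith_of_isDerivSeqOn (convex_Ioo a b) k.lt_succ_self hD htop
    have hosc' : ∀ x ∈ Ioo a b, ∀ y ∈ Ioo a b,
        |D k x - D k y| ≤ (C + L).toNNReal * (b - a) := fun x hx y hy =>
      (hlip.dist_le_mul x hx y hy).trans (by
        gcongr
        exact Real.dist_le_of_mem_Icc (Ioo_subset_Icc_self hx) (Ioo_subset_Icc_self hy))
    intro j hj x hx
    rw [NNReal.coe_max]
    rcases hj.lt_or_eq with hj | rfl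
    · exact le_max_of_le_right (hC' D (hD.mono k.le_succ subset_rfl) hB hosc' j
        (Nat.lt_succ_iff.1 hj) x hx)
    · exact le_max_of_le_left (htop x hx)

theorem exists_holderOnWith_of_hasHolderDerivOn (k : ℕ) (L α : ℝ≥0) (B : ℝ) (hab : a < b) :
    ∃ C : ℝ≥0, ∀ φ, HasHolderDerivOn k L α φ (Ioo a b) → (∀ x ∈ Ioo a b, |φ x| ≤ B) →
      HolderOnWith C (min 1 (k + α)) φ (Ioo a b) := by
  have hdist : ∀ x ∈ Ioo a b, ∀ y ∈ Ioo a b, dist x y ≤ b - a := fun x hx y hy =>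
    Real.dist_le_of_mem_Icc (Ioo_subset_Icc_self hx) (Ioo_subset_Icc_self hy)
  cases k with
  | zero =>
    refine ⟨L * (b - a).toNNReal ^ (α - ↑(min 1 α) : ℝ), ?_⟩
    rintro _ ⟨D, rfl, -, hD0⟩ -
    rw [Nat.cast_zero, zero_add]
    refine hD0.of_le (fun x hx y hy => ?_) (min_le_right 1 α)
    rw [edist_dist]
    exact ENNReal.ofReal_le_ofReal (hdist x hx y hy)
  | succ k =>
    obtain ⟨C, hC⟩ := exists_forall_abs_isDerivSeqOn_le (k + 1) B (L * (b - a) ^ (α : ℝ)) hab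
    refine ⟨C, ?_⟩
    rintro _ ⟨D, rfl, hD, hDk⟩ hB
    have hosc : ∀ x ∈ Ioo a b, ∀ y ∈ Ioo a b,
        |D (k + 1) x - D (k + 1) y| ≤ L * (b - a) ^ (α : ℝ) := fun x hx y hy =>
      hDk.dist_le_of_le hx hy (hdist x hx y hy)
    rw [min_eq_left (le_add_right (by simp)), holderOnWith_one]
    exact lipschitzOnWith_of_isDerivSeqOn (convex_Ioo a b) k.succ_pos hD
      (hC D hD hB hosc 1 (by omega))

end Line

/-! ## Hölder smoothness along the coordinate directions -/

section CoordHolder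

open scoped NNReal

theorem holderOnWith_pi_of_update {ι Y : Type*} {X : ι → Type*} [Fintype ι] [DecidableEq ι]
    [∀ i, PseudoEMetricSpace (X i)] [PseudoEMetricSpace Y] {S : ∀ i, Set (X i)}
    {f : (∀ i, X i) → Y} {C r : ℝ≥0}
    (h : ∀ x ∈ univ.pi S, ∀ i, HolderOnWith C r (fun t => f (Function.update x i t)) (S i)) :
    HolderOnWith (Fintype.card ι * C) r f (univ.pi S) := by
  intro x hx z hz
  have key : ∀ T : Finset ι, T.piecewise z x ∈ univ.pi S ∧
      edist (f x) (f (T.piecewise z x)) ≤ T.card * (C * edist x z ^ (r : ℝ)) := by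
    intro T
    induction T using Finset.induction_on with
    | empty => simpa using hx
    | insert i T hi ih =>
      obtain ⟨hmem, hle⟩ := ih
      have hxi : Function.update (T.piecewise z x) i (x i) = T.piecewise z x := by
        rw [← Finset.piecewise_eq_of_notMem T z x hi, Function.update_eq_self]
      have hstep : edist (f (T.piecewise z x)) (f (Function.update (T.piecewise z x) i (z i))) ≤
          C * edist x z ^ (r : ℝ) := by
        have hline := (h _ hmem i).edist_le_of_le (hx i trivial) (hz i trivial)
          (edist_le_pi_edist x z i)
        rwa [hxi] at hline
      rw [Finset.piecewise_insert, Finset.card_insert_of_notMem hi, Nat.cast_add, Nat.cast_one,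
        add_one_mul]
      exact ⟨(update_mem_pi_iff_of_mem hmem).2 fun _ => hz i trivial,
        (edist_triangle _ _ _).trans (add_le_add hle hstep)⟩
  simpa [mul_assoc] using (key Finset.univ).2

theorem uniformEquicontinuousOn_of_holderOnWith {X Y : Type*} [PseudoMetricSpace X]
    [PseudoMetricSpace Y] {F : Set (X → Y)} {Ω : Set X} {C r : ℝ≥0} (hr : 0 < r)
    (hF : ∀ f ∈ F, HolderOnWith C r f Ω) : UniformEquicontinuousOn ((↑) : F → X → Y) Ω := by
  have hlim : Filter.Tendsto (fun δ : ℝ => C * δ ^ (r : ℝ)) (nhds 0) (nhds 0) := by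
    have hcont : Continuous fun δ : ℝ => C * δ ^ (r : ℝ) :=
      continuous_const.mul (Real.continuous_rpow_const r.coe_nonneg)
    simpa [NNReal.coe_ne_zero.2 hr.ne'] using hcont.tendsto 0
  rw [← uniformEquicontinuous_restrict_iff]
  exact Metric.uniformEquicontinuous_of_continuity_modulus _ hlim _ fun x y f =>
    (hF f f.2).dist_le x.2 y.2

/-- The functions bounded by `B` on the open unit cube that have, along every line parallel to a
coordinate axis, `k` derivatives of which the last is `α`-Hölder with constant `L`. This class
contains a Hölder ball but, involving no mixed derivatives, is easily seen to be stable under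
rescaling. -/
def coordHolder (m k : ℕ) (L α : ℝ≥0) (B : ℝ) : Set ((Fin m → ℝ) → ℝ) :=
  {f | (∀ x ∈ cubeo m, ∀ i,
    HasHolderDerivOn k L α (fun t => f (Function.update x i t)) (Ioo 0 1)) ∧
    ∀ x ∈ cubeo m, |f x| ≤ B}

variable {m k n : ℕ} {L α h : ℝ≥0} {B ε : ℝ}

theorem exists_holderOnWith_of_mem_coordHolder (m k : ℕ) (L α : ℝ≥0) (B : ℝ) :
    ∃ C : ℝ≥0, ∀ f ∈ coordHolder m k L α B, HolderOnWith C (min 1 (k + α)) f (cubeo m) := by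
  obtain ⟨C, hC⟩ := exists_holderOnWith_of_hasHolderDerivOn k L α B zero_lt_one
  refine ⟨Fintype.card (Fin m) * C, fun f hf => holderOnWith_pi_of_update fun x hx i => ?_⟩
  exact hC _ (hf.1 x hx i) fun t ht => hf.2 _ ((update_mem_pi_iff_of_mem hx).2 fun _ => ht)

theorem exists_hasCells_coordHolder (m k : ℕ) (L : ℝ≥0) (hα : 0 < α) (B : ℝ) (hε : 0 < ε) :
    ∃ N, HasCells (cubeo m) (coordHolder m k L α B) N ε := by
  obtain ⟨C, hC⟩ := exists_holderOnWith_of_mem_coordHolder m k L α B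
  have hcube : TotallyBounded (cubeo m) :=
    (isCompact_univ_pi fun _ => isCompact_Icc).totallyBounded.subset
      (pi_mono fun _ _ => Ioo_subset_Icc_self)
  have hr : 0 < min 1 (k + α) := lt_min one_pos (by positivity)
  exact exists_hasCells_of_uniformEquicontinuousOn hcube
    (isCompact_Icc (a := -B) (b := B)).totallyBounded
    (fun f hf x hx => abs_le.1 (hf.2 x hx)) (uniformEquicontinuousOn_of_holderOnWith hr hC) hε

theorem rescale_sub_mem_coordHolder {f g : (Fin m → ℝ) → ℝ} {y : Fin m → ℝ}
    (hf : f ∈ coordHolder m k L α B) (hg : g ∈ coordHolder m k L α B) (hε : 0 < ε)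
    (hfg : ∀ x ∈ cubeo m, dist (f x) (g x) ≤ ε) (hLε : (L + L) * h ^ (k + α : ℝ) ≤ ε)
    (hy : ∀ i, MapsTo (fun t => y i + h * t) (Ioo 0 1) (Ioo 0 1)) :
    (fun x => ε⁻¹ • (f (fun i => y i + h * x i) - g (fun i => y i + h * x i))) ∈
      coordHolder m k 1 α 1 := by
  have hmaps : MapsTo (fun x i => y i + h * x i) (cubeo m) (cubeo m) := fun x hx i _ =>
    hy i (hx i trivial)
  refine ⟨fun x hx i => ?_, fun x hx => ?_⟩
  · have hupdate : ∀ t, (fun j => y j + h * Function.update x i t j) =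
        Function.update (fun j => y j + h * x j) i (y i + h * t) := by
      intro t
      ext j
      rcases eq_or_ne j i with rfl | hj
      · simp
      · simp [hj]
    simp only [hupdate]
    refine ((((hf.1 _ (hmaps hx) i).comp_affine (hy i)).sub
      ((hg.1 _ (hmaps hx) i).comp_affine (hy i))).const_smul ε⁻¹).mono_const ?_
    rw [← add_mul, ← NNReal.coe_le_coe]
    simpa [abs_of_pos hε, ← div_eq_mul_inv, div_le_one hε] using hLε
  · beta_reduce
    rw [smul_eq_mul, abs_mul, abs_of_pos (inv_pos.2 hε), inv_mul_le_one₀ hε]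
    exact hfg _ (hmaps hx)

theorem exists_natCast_mem_Ioo {t : ℝ} (ht : t ∈ Ioo (0 : ℝ) (n + 2)) :
    ∃ a : Fin (n + 1), t ∈ Ioo ((a : ℕ) : ℝ) ((a : ℕ) + 2) := by
  induction n with
  | zero => exact ⟨0, by simpa using ht⟩
  | succ n ih =>
    rcases lt_or_ge t (n + 2) with hlt | hge
    · obtain ⟨a, ha⟩ := ih ⟨ht.1, hlt⟩
      exact ⟨a.castSucc, ha⟩
    · refine ⟨Fin.last _, ?_, ?_⟩
      · push_cast [Fin.val_last]
        linarith
      · simpa using ht.2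

theorem cubeo_subset_iUnion_subcube (m n : ℕ) :
    cubeo m ⊆ ⋃ a : Fin m → Fin (n + 1),
      (fun x i => ((a i : ℕ) : ℝ) / (n + 2) + 2 / (n + 2) * x i) '' cubeo m := by
  intro x hx
  have hn : (0 : ℝ) < n + 2 := by positivity
  have hmem : ∀ i, x i * (n + 2) ∈ Ioo (0 : ℝ) (n + 2) := fun i =>
    ⟨mul_pos (hx i trivial).1 hn, mul_lt_of_lt_one_left hn (hx i trivial).2⟩
  choose a ha using fun i => exists_natCast_mem_Ioo (hmem i)
  refine mem_iUnion.2 ⟨a, fun i => (x i * (n + 2) - (a i : ℕ)) / 2, fun i _ => ⟨?_, ?_⟩, ?_⟩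
  · linarith [(ha i).1]
  · linarith [(ha i).2]
  · ext i
    field_simp
    ring

theorem HasCells.coordHolder_refine {N M ρ : ℝ}
    (hF : HasCells (cubeo m) (coordHolder m k L α B) N ε)
    (hU : HasCells (cubeo m) (coordHolder m k 1 α 1) M ρ) (hε : 0 < ε)
    (hLε : (L + L) * (2 / (n + 2)) ^ (k + α : ℝ) ≤ ε) :
    HasCells (cubeo m) (coordHolder m k L α B) (N * M ^ (n + 1) ^ m) (ρ * ε) := by
  have hmaps : ∀ a : Fin (n + 1), MapsTo
      (fun t : ℝ => ((a : ℕ) : ℝ) / (n + 2) + (2 / (n + 2) : ℝ≥0) * t) (Ioo 0 1) (Ioo 0 1) := by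
    rintro a t ⟨ht0, ht1⟩
    have ha : ((a : ℕ) : ℝ) + 2 ≤ n + 2 := by exact_mod_cast Nat.add_le_add_right a.is_le 2
    refine ⟨by positivity, ?_⟩
    push_cast
    rw [div_mul_eq_mul_div, ← add_div, div_lt_one (by positivity)]
    linarith
  have hrefine := hF.refine hU hε _ (cubeo_subset_iUnion_subcube m n) fun f hf g hg hfg a => by
    simpa using rescale_sub_mem_coordHolder (h := 2 / (n + 2)) hf hg hε hfg (by simpa using hLε)
      fun i => hmaps (a i)
  simpa using hrefine

theorem hasCells_coordHolder_pow (hm : 0 < m) {T E : ℝ} (hT : 0 ≤ T) (hE : 0 < E)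
    (hLE : L + L ≤ E) (hBE : B + B ≤ E)
    (hU : HasCells (cubeo m) (coordHolder m k 1 α 1) (Real.exp T) ((2 ^ (k + α : ℝ))⁻¹)) (J : ℕ) :
    HasCells (cubeo m) (coordHolder m k L α B) (Real.exp (T * (2 ^ (J + 1)) ^ m))
      (((2 ^ (k + α : ℝ))⁻¹) ^ J * E) := by
  induction J with
  | zero =>
    refine (hasCells_one (ε := E) fun f hf g hg x hx => ?_).mono subset_rfl
      (Real.one_le_exp (by positivity)) (by simp)
    exact (abs_sub _ _).trans ((add_le_add (hf.2 x hx) (hg.2 x hx)).trans hBE)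
  | succ J ih =>
    obtain ⟨n, hn⟩ : ∃ n, n + 2 = 2 ^ (J + 1) :=
      ⟨2 ^ (J + 1) - 2, Nat.sub_add_cancel (Nat.le_self_pow J.succ_ne_zero 2)⟩
    have hnR : (n + 2 : ℝ) = 2 ^ (J + 1) := by exact_mod_cast hn
    have hside : (2 / (n + 2) : ℝ) ^ (k + α : ℝ) = ((2 ^ (k + α : ℝ))⁻¹) ^ J := by
      rw [hnR, pow_succ, div_mul_cancel_right₀ two_ne_zero, Real.inv_rpow (by positivity),
        inv_pow, Real.rpow_pow_comm zero_le_two]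
    refine (ih.coordHolder_refine (n := n) hU (by positivity) ?_).mono subset_rfl ?_
      (le_of_eq (by ring))
    · rw [hside, mul_comm]
      gcongr
    · rw [← Real.exp_nat_mul, ← Real.exp_add, Real.exp_le_exp]
      have hcard : (((n + 1) ^ m : ℕ) : ℝ) ≤ (2 ^ (J + 1)) ^ m := by
        rw [← hnR]
        push_cast
        gcongr
        norm_num
      have hm2 : (2 : ℝ) ≤ 2 ^ m := le_self_pow₀ one_le_two hm.ne'
      calc T * (2 ^ (J + 1)) ^ m + ((n + 1) ^ m : ℕ) * T
          ≤ T * (2 ^ (J + 1)) ^ m + (2 ^ (J + 1)) ^ m * T := by gcongr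
        _ = T * (2 * (2 ^ (J + 1)) ^ m) := by ring
        _ ≤ T * (2 ^ m * (2 ^ (J + 1)) ^ m) := by gcongr
        _ = T * (2 ^ (J + 1 + 1)) ^ m := by rw [← mul_pow, ← pow_succ']

theorem hasEntropyExponent_coordHolder (hm : 0 < m) (k : ℕ) (L : ℝ≥0) (hα : 0 < α) (B : ℝ) :
    HasEntropyExponent (cubeo m) (coordHolder m k L α B) (m / (k + α)) := by
  have hβ : 0 < (k + α : ℝ) := by positivity
  set ρ : ℝ := (2 ^ (k + α : ℝ))⁻¹
  have hρ : 0 < ρ := by positivity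
  obtain ⟨N, hN⟩ := exists_hasCells_coordHolder m k 1 hα 1 hρ
  have hU := hN.mono subset_rfl (N' := Real.exp |N|)
    ((le_abs_self N).trans (by linarith [Real.add_one_le_exp |N|])) le_rfl
  obtain ⟨E, hE1, hLE, hBE⟩ : ∃ E : ℝ, 1 ≤ E ∧ L + L ≤ E ∧ B + B ≤ E :=
    ⟨max 1 (max (L + L) (B + B)), by simp, by simp, by simp⟩
  refine .of_geometric (T := |N| * 2 ^ m) (E := E) (ρ := ρ) (by positivity) hE1 hρ
    (inv_lt_one_of_one_lt₀ (Real.one_lt_rpow one_lt_two hβ)) (by positivity) fun n => ?_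
  have hpow : (1 / ρ ^ n) ^ (m / (k + α : ℝ)) = (2 ^ n) ^ m := by
    rw [one_div, inv_pow, inv_inv, Real.rpow_pow_comm zero_le_two, ← Real.rpow_mul (by positivity),
      mul_div_cancel₀ _ hβ.ne', Real.rpow_natCast]
  rw [hpow, mul_assoc, ← mul_pow, ← pow_succ']
  exact hasCells_coordHolder_pow hm (abs_nonneg N) (by positivity) hLE hBE hU n

end CoordHolder

/-! ## Hölder balls -/

section HolderBall

open scoped NNReal

theorem holderOnWith_closure {X Y : Type*} [PseudoEMetricSpace X] [PseudoEMetricSpace Y]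
    {f : X → Y} {s : Set X} {C r : ℝ≥0} (h : HolderOnWith C r f s)
    (hf : ContinuousOn f (closure s)) : HolderOnWith C r f (closure s) := by
  have hdist : Continuous fun p : X × X => (C * edist p.1 p.2 ^ (r : ℝ) : ℝ≥0∞) :=
    (ENNReal.continuous_const_mul ENNReal.coe_ne_top).comp
      (ENNReal.continuous_rpow_const.comp continuous_edist)
  have hle : ∀ p ∈ closure (s ×ˢ s), edist (f p.1) (f p.2) ≤ C * edist p.1 p.2 ^ (r : ℝ) := by
    refine le_on_closure (fun p hp => h p.1 hp.1 p.2 hp.2) ?_ hdist.continuousOn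
    rw [closure_prod_eq]
    exact continuous_edist.comp_continuousOn (hf.prodMap hf)
  rw [closure_prod_eq] at hle
  exact fun x hx y hy => hle (x, y) ⟨hx, hy⟩

variable {m n k : ℕ} {β r : ℝ} {f : (Fin m → ℝ) → ℝ}

theorem isOpen_cubeo (m : ℕ) : IsOpen (cubeo m) :=
  isOpen_set_pi finite_univ fun _ _ => isOpen_Ioo

theorem closure_cubeo (m : ℕ) : closure (cubeo m) = cube m := by
  simp only [cubeo, cube, closure_pi_set, closure_Ioo zero_ne_one]

theorem smoothOrder_eq (hβ : 0 < β) : (smoothOrder β : ℝ) = (⌈β⌉ : ℝ) - 1 := by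
  have hint : (smoothOrder β : ℤ) = ⌈β⌉ - 1 := by
    rw [smoothOrder, Int.natCast_ceil_eq_ceil_of_neg_one_lt (by linarith), Int.ceil_sub_one]
  exact_mod_cast hint

theorem smoothOrder_lt (hβ : 0 < β) : (smoothOrder β : ℝ) < β := by
  rw [smoothOrder_eq hβ]
  linarith [Int.ceil_lt_add_one β]

theorem mord_single (i : Fin m) (k : ℕ) : mord (Pi.single i k) = k := by
  simp [mord]

theorem idxList_single (i : Fin m) (k : ℕ) : idxList (Pi.single i k) = List.replicate k i := by
  rw [List.eq_replicate_iff, idxList, List.length_flatMap]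
  constructor
  · simp [← List.ofFn_eq_map, List.sum_ofFn]
  · simp only [List.mem_flatMap, List.mem_replicate]
    rintro _ ⟨j, -, hj, rfl⟩
    by_contra hne
    exact hj (by rw [Pi.single_eq_of_ne hne])

/-- The partial derivative in the direction of the `i`-th coordinate, with the junk value `0` where
`f` is not differentiable. -/
def partialDeriv (i : Fin m) (f : (Fin m → ℝ) → ℝ) : (Fin m → ℝ) → ℝ :=
  fun x => fderiv ℝ f x (Pi.single i 1)

theorem Dm_single (i : Fin m) (k : ℕ) (f : (Fin m → ℝ) → ℝ) :
    Dm (Pi.single i k) f = (partialDeriv i)^[k] f := by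
  rw [Dm, idxList_single]
  induction k generalizing f with
  | zero => rfl
  | succ k ih =>
    rw [List.replicate_succ, Function.iterate_succ_apply, ← ih]
    rfl

theorem Dm_zero (f : (Fin m → ℝ) → ℝ) : Dm 0 f = f := by
  have hnil : idxList (0 : Fin m → ℕ) = [] := by simp [idxList]
  rw [Dm, hnil, pderivList]

theorem contDiffOn_iterate_partialDeriv {S : Set (Fin m → ℝ)} (hS : IsOpen S) (i : Fin m)
    (hf : ContDiffOn ℝ ((n + k : ℕ) : ℕ∞) f S) :
    ContDiffOn ℝ (n : ℕ∞) ((partialDeriv i)^[k] f) S := by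
  induction k generalizing n with
  | zero => exact hf
  | succ k ih =>
    rw [Function.iterate_succ_apply']
    have hderiv := ih (n := n + 1) (by rwa [Nat.add_right_comm, add_assoc])
    exact (hderiv.fderiv_of_isOpen hS (by norm_cast)).clm_apply contDiffOn_const

theorem isDerivSeqOn_iterate_partialDeriv (hf : ContDiffOn ℝ (k : ℕ∞) f (cubeo m))
    {x : Fin m → ℝ} (hx : x ∈ cubeo m) (i : Fin m) :
    IsDerivSeqOn (fun j t => (partialDeriv i)^[j] f (Function.update x i t)) k (Ioo 0 1) := by
  intro j hj t ht
  have hmem : Function.update x i t ∈ cubeo m := (update_mem_pi_iff_of_mem hx).2 fun _ => ht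
  have hsmooth : ContDiffOn ℝ ((1 : ℕ) : ℕ∞) ((partialDeriv i)^[j] f) (cubeo m) :=
    contDiffOn_iterate_partialDeriv (isOpen_cubeo m) i
      (hf.of_le (by exact_mod_cast (by omega : 1 + j ≤ k)))
  have hdiff : DifferentiableAt ℝ ((partialDeriv i)^[j] f) (Function.update x i t) :=
    (hsmooth.differentiableOn (by simp)).differentiableAt ((isOpen_cubeo m).mem_nhds hmem)
  simp only [Function.iterate_succ_apply']
  exact hdiff.hasFDerivAt.comp_hasDerivAt t (hasDerivAt_update x i t)

theorem e2_update (x : Fin m → ℝ) (i : Fin m) (s t : ℝ) :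
    e2 (Function.update x i s) (Function.update x i t) = |s - t| := by
  rw [e2, Finset.sum_eq_single i]
  · simp [Real.sqrt_sq_eq_abs]
  · intro j _ hj
    simp [hj]
  · simp

theorem e2_pos {x z : Fin m → ℝ} (hxz : x ≠ z) : 0 < e2 x z := by
  obtain ⟨i, hi⟩ := Function.ne_iff.1 hxz
  exact Real.sqrt_pos.2 (Finset.sum_pos' (fun _ _ => sq_nonneg _)
    ⟨i, Finset.mem_univ i, sq_pos_of_ne_zero (sub_ne_zero.2 hi)⟩)

theorem abs_le_of_mem_HolderBall (hβ : 0 < β) (hr : 0 ≤ r) (hf : f ∈ HolderBall m β r)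
    {x : Fin m → ℝ} (hx : x ∈ cubeo m) : |f x| ≤ r := by
  have hnorm := le_self_add.trans hf.2.2.2
  simp only [iSup_le_iff] at hnorm
  simpa only [Dm_zero, ENNReal.ofReal_le_ofReal_iff hr] using
    hnorm 0 (by simpa [mord] using hβ) x hx

theorem abs_Dm_sub_le_of_mem_HolderBall (hβ : 0 < β) (hr : 0 ≤ r) (hf : f ∈ HolderBall m β r)
    {u : Fin m → ℕ} (hu : mord u = smoothOrder β) {x z : Fin m → ℝ} (hx : x ∈ cubeo m)
    (hz : z ∈ cubeo m) : |Dm u f x - Dm u f z| ≤ r * e2 x z ^ (β - smoothOrder β) := by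
  rcases eq_or_ne x z with rfl | hxz
  · rw [sub_self, abs_zero]
    exact mul_nonneg hr (Real.rpow_nonneg (Real.sqrt_nonneg _) _)
  have hpos := e2_pos hxz
  have hnorm := le_add_self.trans hf.2.2.2
  simp only [iSup_le_iff] at hnorm
  have hquot := hnorm u ⟨by rw [hu, smoothOrder_eq hβ], hu ▸ smoothOrder_lt hβ⟩ x hx z hz hxz
  rwa [ENNReal.ofReal_rpow_of_pos hpos, ← ENNReal.ofReal_div_of_pos (by positivity),
    ENNReal.ofReal_le_ofReal_iff hr, div_le_iff₀ (by positivity), add_sub_right_comm, sub_add,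
    ← smoothOrder_eq hβ] at hquot

theorem HolderBall_subset_coordHolder {β r : ℝ≥0} (m : ℕ) (hβ : 0 < β) :
    HolderBall m β r ⊆ coordHolder m (smoothOrder β) r (β - smoothOrder β) r := by
  have hβ' : (0 : ℝ) < β := hβ
  have hα : ((β - smoothOrder β : ℝ≥0) : ℝ) = β - smoothOrder β :=
    NNReal.coe_sub (by exact_mod_cast (smoothOrder_lt hβ').le)
  intro f hf
  refine ⟨fun x hx i => ⟨_, rfl, isDerivSeqOn_iterate_partialDeriv hf.2.1 hx i,
    holderOnWith_of_dist_le fun s hs t ht => ?_⟩,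
    fun x hx => abs_le_of_mem_HolderBall hβ' r.coe_nonneg hf hx⟩
  have hmem : ∀ t ∈ Ioo (0 : ℝ) 1, Function.update x i t ∈ cubeo m := fun t ht =>
    (update_mem_pi_iff_of_mem hx).2 fun _ => ht
  simpa only [Dm_single, e2_update, hα, ← Real.dist_eq] using
    abs_Dm_sub_le_of_mem_HolderBall hβ' r.coe_nonneg hf (mord_single i _) (hmem s hs) (hmem t ht)

theorem exists_holderOnWith_of_mem_HolderBall {β : ℝ≥0} (m : ℕ) (hβ : 0 < β) (r : ℝ≥0) :
    ∃ C : ℝ≥0, ∀ f ∈ HolderBall m β r, HolderOnWith C (min 1 β) f (cube m) := by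
  obtain ⟨C, hC⟩ := exists_holderOnWith_of_mem_coordHolder m (smoothOrder β) r
    (β - smoothOrder β) r
  rw [add_tsub_cancel_of_le (by exact_mod_cast (smoothOrder_lt hβ).le)] at hC
  refine ⟨C, fun f hf => ?_⟩
  rw [← closure_cubeo]
  exact holderOnWith_closure (hC f (HolderBall_subset_coordHolder m hβ hf))
    (closure_cubeo m ▸ hf.1)

theorem hasEntropyExponent_HolderBall {β : ℝ≥0} (hm : 0 < m) (hβ : 0 < β) (r : ℝ≥0) :
    HasEntropyExponent (cube m) (HolderBall m β r) (m / β) := by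
  have hβ' : smoothOrder β < β := by exact_mod_cast smoothOrder_lt hβ
  have hcubeo := (hasEntropyExponent_coordHolder hm (smoothOrder β) r (tsub_pos_of_lt hβ') r).mono
    (HolderBall_subset_coordHolder m hβ)
  rw [NNReal.coe_sub hβ'.le, NNReal.coe_natCast, add_sub_cancel] at hcubeo
  rw [← closure_cubeo]
  exact hcubeo.closure fun f hf => closure_cubeo m ▸ hf.1

end HolderBall

/-! ## Compositions -/

section Composition

open scoped NNReal

theorem holderOnWith_congr {X Y : Type*} [PseudoEMetricSpace X] [PseudoEMetricSpace Y]
    {f g : X → Y} {s : Set X} {C r : ℝ≥0} (hg : HolderOnWith C r g s) (hfg : EqOn f g s) :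
    HolderOnWith C r f s := by
  intro x hx y hy
  rw [hfg hx, hfg hy]
  exact hg x hx y hy

theorem holderOnWith_pi {X ι : Type*} {Y : ι → Type*} [PseudoEMetricSpace X] [Fintype ι]
    [∀ i, PseudoEMetricSpace (Y i)] {f : X → ∀ i, Y i} {s : Set X} {C r : ℝ≥0}
    (h : ∀ i, HolderOnWith C r (fun x => f x i) s) : HolderOnWith C r f s :=
  fun x hx y hy => edist_pi_le_iff.2 fun i => h i x hx y hy

theorem lipschitzWith_finset_sup' {ι : Type*} [Fintype ι] (I : Finset ι) (hI : I.Nonempty) :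
    LipschitzWith 1 fun x : ι → ℝ => I.sup' hI fun i => x i := by
  have hsup : LipschitzWith 1 (I.sup' hI fun i (x : ι → ℝ) => x i) :=
    Finset.sup'_induction hI _ (fun f hf g hg => max_self (1 : ℝ≥0) ▸ hf.max hg)
      fun i _ => LipschitzWith.eval i
  convert hsup using 2
  rw [Finset.sup'_apply]

variable {m dstar : ℕ} {a : ℝ≥0} {s : ℝ} {f : (Fin m → ℝ) → ℝ}

theorem mapsTo_cube_precomp (e : Fin dstar → Fin m) :
    MapsTo (fun (x : Fin m → ℝ) j => x (e j)) (cube m) (cube dstar) :=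
  fun _ hx j _ => hx (e j) trivial

theorem holderOnWith_of_mem_GM {dmax : ℕ} (hf : f ∈ GM m dmax) (ha : a ≤ 1) :
    HolderOnWith 1 a f (cube m) := by
  obtain ⟨I, hI, -, hf⟩ := hf
  have hcube : ∀ x ∈ cube m, ∀ y ∈ cube m, edist x y ≤ (1 : ℝ≥0) := fun x hx y hy =>
    edist_pi_le_iff.2 fun i => by
      rw [edist_dist, ENNReal.coe_one, ENNReal.ofReal_le_one]
      simpa using Real.dist_le_of_mem_Icc (hx i trivial) (hy i trivial)
  have hlip := (lipschitzWith_finset_sup' I hI).lipschitzOnWith (s := cube m)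
  simpa using holderOnWith_congr ((holderOnWith_one.2 hlip).of_le hcube ha) hf

theorem exists_holderOnWith_of_mem_GH {β : ℝ≥0} (m dstar : ℕ) (hβ : 0 < β) (r : ℝ≥0) :
    ∃ C : ℝ≥0, ∀ f ∈ GH m dstar β r, HolderOnWith C (min 1 β) f (cube m) := by
  obtain ⟨C, hC⟩ := exists_holderOnWith_of_mem_HolderBall dstar hβ r
  refine ⟨C, ?_⟩
  rintro f ⟨e, g, -, hg, hfg⟩
  have hproj : LipschitzWith 1 fun (x : Fin m → ℝ) j => x (e j) :=
    LipschitzWith.of_edist_le fun x y => edist_pi_le_iff.2 fun j => edist_le_pi_edist x y (e j)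
  simpa using holderOnWith_congr ((hC g hg).comp (holderOnWith_one.2 hproj.lipschitzOnWith)
    (mapsTo_cube_precomp e)) hfg

theorem exists_holderOnWith_of_mem_GH_union_GM {β : ℝ≥0} (m dmax dstar : ℕ) (hβ : 0 < β)
    (r : ℝ≥0) :
    ∃ C : ℝ≥0, ∀ f ∈ GH m dstar β r ∪ GM m dmax, HolderOnWith C (min 1 β) f (cube m) := by
  obtain ⟨C, hC⟩ := exists_holderOnWith_of_mem_GH m dstar hβ r
  refine ⟨max C 1, ?_⟩
  rintro f (hf | hf)
  · exact (hC f hf).mono_const (le_max_left C 1)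
  · exact (holderOnWith_of_mem_GM hf (min_le_left 1 β)).mono_const (le_max_right C 1)

theorem exists_holderOnWith_of_mem_GCHOM {β : ℝ≥0} (K dmax dstar : ℕ) (hβ : 0 < β) (r : ℝ≥0)
    (q d : ℕ) :
    ∃ C : ℝ≥0, ∀ f ∈ GCHOM K dmax dstar β r q d,
      HolderOnWith C (min 1 β ^ (q + 1)) f (cube d) := by
  have hlayer := fun d => exists_holderOnWith_of_mem_GH_union_GM d dmax dstar hβ r
  induction q generalizing d with
  | zero =>
    obtain ⟨C, hC⟩ := hlayer d
    refine ⟨C, ?_⟩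
    rintro f ⟨g, hg, hfg⟩
    rw [zero_add, pow_one]
    exact holderOnWith_congr (hC g hg) hfg
  | succ q ih =>
    obtain ⟨C₁, hC₁⟩ := hlayer d
    obtain ⟨C₂, hC₂⟩ := ih K
    refine ⟨C₂ * C₁ ^ ((min 1 β ^ (q + 1) : ℝ≥0) : ℝ), ?_⟩
    rintro f ⟨H, g, hH, hHcube, hg, hfg⟩
    rw [pow_succ]
    exact holderOnWith_congr ((hC₂ g hg).comp (holderOnWith_pi fun j => hC₁ _ (hH j)) hHcube) hfg

theorem hasEntropyExponent_GM (m dmax : ℕ) (hs : 0 ≤ s) :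
    HasEntropyExponent (cube m) (GM m dmax) s := by
  refine (HasEntropyExponent.iUnion hs fun I : {I : Finset (Fin m) // I.Nonempty} =>
    hasEntropyExponent_of_eqOn (F := {f | ∀ x ∈ cube m, f x = I.1.sup' I.2 fun i => x i})
      fun f hf g hg x hx => (hf x hx).trans (hg x hx).symm).mono ?_
  rintro f ⟨I, hI, -, hf⟩
  exact mem_iUnion.2 ⟨⟨I, hI⟩, hf⟩

theorem hasEntropyExponent_GH {β : ℝ≥0} (m : ℕ) (hdstar : 0 < dstar) (hβ : 0 < β) (r : ℝ≥0) :
    HasEntropyExponent (cube m) (GH m dstar β r) (dstar / β) := by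
  refine (HasEntropyExponent.iUnion (by positivity) fun e : Fin dstar → Fin m =>
    (hasEntropyExponent_HolderBall hdstar hβ r).precomp (mapsTo_cube_precomp e)).mono ?_
  rintro f ⟨e, g, -, hg, hfg⟩
  exact mem_iUnion.2 ⟨e, g, hg, hfg⟩

theorem hasEntropyExponent_GCHOM {β : ℝ≥0} (K dmax : ℕ) (hdstar : 0 < dstar) (hβ : 0 < β)
    (r : ℝ≥0) (q d : ℕ) :
    HasEntropyExponent (cube d) (GCHOM K dmax dstar β r q d)
      (dstar / (β * min 1 (β : ℝ) ^ q)) := by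
  have hlayer : ∀ d, HasEntropyExponent (cube d) (GH d dstar β r ∪ GM d dmax) (dstar / β) :=
    fun d => .union (by positivity) (hasEntropyExponent_GH d hdstar hβ r)
      (hasEntropyExponent_GM d dmax (by positivity))
  induction q generalizing d with
  | zero =>
    rw [pow_zero, mul_one]
    exact (hlayer d).precomp (mapsTo_id (cube d))
  | succ q ih =>
    have ha : 0 < min 1 β := lt_min one_pos hβ
    obtain ⟨C, hC⟩ := exists_holderOnWith_of_mem_GCHOM K dmax dstar hβ r q K
    have hexp : dstar / (β * min 1 (β : ℝ) ^ q) ≤ dstar / β / (min 1 β ^ (q + 1) : ℝ≥0) := by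
      have hmin : (0 : ℝ) < min 1 (β : ℝ) := by exact_mod_cast ha
      rw [div_div]
      push_cast
      gcongr _ / (_ * ?_)
      exact pow_le_pow_of_le_one hmin.le (min_le_left _ _) q.le_succ
    have hcomp := (hlayer d).pi.comp (ih K) (by positivity) (pow_pos ha (q + 1)) hC hexp
    rw [div_div] at hcomp
    push_cast at hcomp
    refine hcomp.mono ?_
    rintro f ⟨H, g, hH, hHcube, hg, hfg⟩
    exact ⟨H, hH, g, hg, hHcube, hfg⟩

end Composition

/-- Lemma 6.5 : covering-number bound for the compositional class. -/
theorem statement_11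
    (d q K dmax dstar : ℕ) (hd : 0 < d) (hK : 0 < K) (hdmax : 0 < dmax) (hdstar : 0 < dstar)
    (β r : ℝ) (hβ : 0 < β) (hr : 0 < r)
    (h1 : dstar ≤ d) (h2 : dstar * q ≤ K * q) :
    ∃ c : ℝ, 0 < c ∧
      ∀ γ : ℝ, 0 < γ → γ ≤ 1 →
        coveringNumber (cube d) (GCHOM K dmax dstar β r q d) γ ≤
          ENNReal.ofReal (Real.exp (c * (1 / γ) ^ ((dstar : ℝ) / (β * min 1 β ^ q)))) := by
  lift β to NNReal using hβ.le
  lift r to NNReal using hr.le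
  obtain ⟨c, hc, hcells⟩ :=
    (hasEntropyExponent_GCHOM K dmax hdstar (by exact_mod_cast hβ) r q d).exists_pos
  exact ⟨c, hc, fun γ hγ hγ1 => (hcells γ hγ hγ1).coveringNumber_le⟩

end ZZS
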